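/- Let L > 0 and μ > 0, set λ = (3π)^{2/5} μ^{-4/5} and l = π/√λ, and assume l < L/2. Define ψ₁ : ℝ → ℝ by ψ₁(x) = (1/(λμ))(1 + cos(√λ (x − L/2))) if |x − L/2| ≤ l and ψ₁(x) = 0 otherwise. Then for every x with |x − L/2| < l, ψ₁ is twice differentiable at x, ψ₁(x) > 0, and the Euler–Lagrange equation −ψ₁''(x) + 1/μ = λ ψ₁(x) holds. -/

import Mathlib

/-!
On the open interval `|x - L / 2| < l` the function `ψ` agrees with the smooth raised cosine
`a * (1 + cos (√lam * (x - L / 2)))`, `a = 1 / (lam * μ)`. Its deviation from the mean value `a` is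
harmonic of frequency `√lam`, which is the Euler–Lagrange equation because `lam * a = 1 / μ`.
The half-width `l` is half a period, so the raised cosine reaches its minimum `0` only at the
endpoints.
-/

open Real MeasureTheory

theorem neg_one_lt_cos_of_abs_lt_pi {x : ℝ} (hx : |x| < π) : -1 < cos x := by
  simpa only [cos_pi, cos_abs] using cos_lt_cos_of_nonneg_of_le_pi (abs_nonneg x) le_rfl hx

/-- The raised cosine of mean value `a`, angular frequency `ω` and centre `c`, the smooth periodic
profile whose restriction to one period is the compactly supported solution. -/
noncomputable def raisedCosine (a ω c x : ℝ) : ℝ :=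
  a * (1 + cos (ω * (x - c)))

section RaisedCosine

variable (a ω c x : ℝ)

theorem hasDerivAt_mul_sub_const : HasDerivAt (fun y ↦ ω * (y - c)) ω x := by
  simpa using ((hasDerivAt_id x).sub_const c).const_mul ω

theorem hasDerivAt_raisedCosine :
    HasDerivAt (raisedCosine a ω c) (a * (-sin (ω * (x - c)) * ω)) x :=
  ((hasDerivAt_mul_sub_const ω c x).cos.const_add 1).const_mul a

theorem deriv_raisedCosine :
    deriv (raisedCosine a ω c) = fun x ↦ a * (-sin (ω * (x - c)) * ω) :=
  deriv_eq (hasDerivAt_raisedCosine a ω c)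

theorem hasDerivAt_deriv_raisedCosine :
    HasDerivAt (deriv (raisedCosine a ω c)) (ω ^ 2 * (a - raisedCosine a ω c x)) x := by
  rw [deriv_raisedCosine]
  refine (((hasDerivAt_mul_sub_const ω c x).sin.neg.mul_const ω).const_mul a).congr_deriv ?_
  simp only [raisedCosine]
  ring

variable {a ω c x}

theorem raisedCosine_pos (ha : 0 < a) (hx : |ω * (x - c)| < π) : 0 < raisedCosine a ω c x :=
  mul_pos ha (by linarith [neg_one_lt_cos_of_abs_lt_pi hx])

end RaisedCosine

theorem stmt_1_general (c μ lam l : ℝ) (hμ : 0 < μ) (hlam : 0 < lam) (hl : l = π / √lam)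
    (ψ : ℝ → ℝ)
    (hψ : ∀ x : ℝ, |x - c| < l → ψ x = (1 / (lam * μ)) * (1 + cos (√lam * (x - c)))) :
    ∀ x : ℝ, |x - c| < l →
      DifferentiableAt ℝ ψ x ∧ DifferentiableAt ℝ (deriv ψ) x ∧
      0 < ψ x ∧
      -(deriv (deriv ψ) x) + 1 / μ = lam * ψ x := by
  intro x hx
  have hψ_near : ψ =ᶠ[nhds x] raisedCosine (1 / (lam * μ)) √lam c :=
    Filter.eventuallyEq_of_mem (Metric.isOpen_ball.mem_nhds hx) hψ
  have hψ' := (hasDerivAt_raisedCosine _ _ _ x).congr_of_eventuallyEq hψ_near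
  have hψ'' := (hasDerivAt_deriv_raisedCosine _ _ _ x).congr_of_eventuallyEq hψ_near.deriv
  refine ⟨hψ'.differentiableAt, hψ''.differentiableAt, ?_, ?_⟩
  · have hphase : |√lam * (x - c)| < π := by
      rwa [abs_mul, abs_of_nonneg (sqrt_nonneg lam), ← lt_div_iff₀' (sqrt_pos.mpr hlam), ← hl]
    rw [hψ_near.eq_of_nhds]
    exact raisedCosine_pos (by positivity) hphase
  · rw [hψ''.deriv, hψ_near.eq_of_nhds, sq_sqrt hlam.le]
    field_simp
    ring

theorem stmt_1 (L μ lam l : ℝ) (hL : 0 < L) (hμ : 0 < μ)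
    (hlam : lam = (3 * Real.pi) ^ ((2 : ℝ) / 5) * μ ^ (-(4 : ℝ) / 5))
    (hl : l = Real.pi / Real.sqrt lam) (hlL : l < L / 2)
    (ψ : ℝ → ℝ)
    (hψ : ∀ x : ℝ, ψ x =
      if |x - L / 2| ≤ l then (1 / (lam * μ)) * (1 + Real.cos (Real.sqrt lam * (x - L / 2)))
      else 0) :
    ∀ x : ℝ, |x - L / 2| < l →
      DifferentiableAt ℝ ψ x ∧ DifferentiableAt ℝ (deriv ψ) x ∧
      0 < ψ x ∧
      -(deriv (deriv ψ) x) + 1 / μ = lam * ψ x :=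
  stmt_1_general (L / 2) μ lam l hμ (by rw [hlam]; positivity) hl ψ
    fun x hx ↦ by rw [hψ x, if_pos hx.le]
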